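/- Let V and W be real Hilbert spaces and a : V × W → ℝ a bounded bilinear form. Let A : V → W' be the bounded linear operator into the topological dual of W defined by (A v)(w) = a(v, w). Then A is bijective if and only if there exists β > 0 such that both inf-sup conditions hold: β‖v‖ ≤ sup{ a(v, w)/‖w‖ : w ∈ W, w ≠ 0 } for all v ∈ V, and β‖w‖ ≤ sup{ a(v, w)/‖v‖ : v ∈ V, v ≠ 0 } for all w ∈ W. -/

import Mathlib

/-!
By the open mapping theorem, an operator `A : V → W'` between Banach spaces is bijective if and only
if it is bounded below and has dense range. Since `‖f‖ = sup f w / ‖w‖`, the two inf-sup conditions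
say that `A` and its transpose `A.flip : W → V'` are bounded below by `β`.
If `A` is surjective, every functional on `W` is some `A v`, so the lower bound for `A` passes to
`A.flip` with the same `β` by computing `‖w‖` through functionals. Conversely, a functional on `W'`
vanishing on the range of `A` is, by reflexivity of `W`, evaluation at some `w` with `A.flip w = 0`;
if `A.flip` is injective it is zero, and the range is dense by Hahn–Banach.
-/

open ContinuousLinearMap Function NormedSpace

/-- Reflexivity in the sense of Banach spaces: the canonical map of `E` into its topological
bidual is onto. `Module.IsReflexive` is the algebraic notion, about the full dual. -/
def IsReflexiveSpace (𝕜 E : Type*) [NontriviallyNormedField 𝕜] [SeminormedAddCommGroup E]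
    [NormedSpace 𝕜 E] : Prop :=
  Surjective (inclusionInDoubleDual 𝕜 E)

theorem sSup_apply_div_norm_eq_opNorm {E : Type*} [SeminormedAddCommGroup E] [NormedSpace ℝ E]
    (f : StrongDual ℝ E) : sSup {x : ℝ | ∃ w : E, w ≠ 0 ∧ x = f w / ‖w‖} = ‖f‖ := by
  set S := {x : ℝ | ∃ w : E, w ≠ 0 ∧ x = f w / ‖w‖}
  have le_opNorm_of_mem : ∀ x ∈ S, x ≤ ‖f‖ := by
    rintro _ ⟨w, -, rfl⟩
    exact (le_abs_self _).trans <| by simpa [abs_div] using f.ratio_le_opNorm w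
  have abs_div_le : ∀ w ≠ 0, |f w / ‖w‖| ≤ sSup S := fun w hw ↦
    have bdd : BddAbove S := ⟨‖f‖, le_opNorm_of_mem⟩
    abs_le'.2 ⟨le_csSup bdd ⟨w, hw, rfl⟩, le_csSup bdd ⟨-w, neg_ne_zero.2 hw, by simp [neg_div]⟩⟩
  have sSup_nonneg : 0 ≤ sSup S := by
    by_cases! h : ∃ w : E, w ≠ 0
    · obtain ⟨w, hw⟩ := h
      exact (abs_nonneg _).trans (abs_div_le w hw)
    · -- `E` is trivial, and `sSup ∅ = 0`.
      simp [S, h]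
  refine le_antisymm (Real.sSup_le le_opNorm_of_mem (norm_nonneg f)) ?_
  refine f.opNorm_le_bound' sSup_nonneg fun w hw ↦ ?_
  have hw0 : w ≠ 0 := by rintro rfl; simp at hw
  simpa [abs_div, div_le_iff₀ (hw.symm.lt_of_le (norm_nonneg w))] using abs_div_le w hw0

section RCLike

variable {𝕜 : Type*} [RCLike 𝕜]

theorem isReflexiveSpace_of_innerProductSpace {H : Type*} [NormedAddCommGroup H]
    [InnerProductSpace 𝕜 H] [CompleteSpace H] : IsReflexiveSpace 𝕜 H := by
  intro φ
  let D := InnerProductSpace.toDual 𝕜 H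
  -- `D` is conjugate-linear, so `φ ∘ D` has to be conjugated to become a functional.
  let ψ : StrongDual 𝕜 H :=
    (starL 𝕜 : 𝕜 ≃L⋆[𝕜] 𝕜).toContinuousLinearMap.comp
      (φ.comp D.toContinuousLinearEquiv.toContinuousLinearMap)
  refine ⟨D.symm ψ, ContinuousLinearMap.ext fun f ↦ ?_⟩
  obtain ⟨w, rfl⟩ := D.surjective f
  calc D w (D.symm ψ) = star (inner 𝕜 (D.symm ψ) w) := (inner_conj_symm _ _).symm
    _ = star (star (φ (D w))) := congrArg star InnerProductSpace.toDual_symm_apply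
    _ = φ (D w) := star_star _

theorem topologicalClosure_eq_top_of_forall_dual {F : Type*} [SeminormedAddCommGroup F]
    [NormedSpace 𝕜 F] {S : Submodule 𝕜 F}
    (h : ∀ φ : StrongDual 𝕜 F, (∀ x ∈ S, φ x = 0) → φ = 0) : S.topologicalClosure = ⊤ := by
  refine Submodule.eq_top_iff'.2 fun x ↦ ?_
  -- Hahn–Banach is applied in the quotient `F ⧸ S.topologicalClosure`, which is normed only because
  -- the closure is closed.
  have : IsClosed (S.topologicalClosure : Set F) := S.isClosed_topologicalClosure
  rw [← Submodule.Quotient.mk_eq_zero]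
  refine SeparatingDual.eq_zero_of_forall_dual_eq_zero (R := 𝕜) fun g ↦ ?_
  have comp_mkQL_eq_zero : g.comp S.topologicalClosure.mkQL = 0 := h _ fun y hy ↦ by
    simp [(Submodule.Quotient.mk_eq_zero _).2 (S.le_topologicalClosure hy)]
  exact DFunLike.congr_fun comp_mkQL_eq_zero x

section Seminormed

variable {V W : Type*} [SeminormedAddCommGroup V] [NormedSpace 𝕜 V]
  [SeminormedAddCommGroup W] [NormedSpace 𝕜 W] {A : V →L[𝕜] StrongDual 𝕜 W}

theorem mul_norm_le_norm_flip_of_surjective {β : ℝ} (hβ : 0 < β) (hA : Surjective A)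
    (hbelow : ∀ v, β * ‖v‖ ≤ ‖A v‖) (w : W) : β * ‖w‖ ≤ ‖A.flip w‖ := by
  rw [← le_div_iff₀' hβ]
  refine norm_le_dual_bound 𝕜 w (by positivity) fun f ↦ ?_
  obtain ⟨v, rfl⟩ := hA f
  calc ‖A v w‖ ≤ ‖A.flip w‖ * ‖v‖ := (A.flip w).le_opNorm v
    _ ≤ ‖A.flip w‖ * (‖A v‖ / β) := by gcongr; exact (le_div_iff₀' hβ).2 (hbelow v)
    _ = ‖A.flip w‖ / β * ‖A v‖ := by ring

theorem topologicalClosure_range_eq_top_of_injective_flip (hW : IsReflexiveSpace 𝕜 W)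
    (hA : Injective A.flip) : A.range.topologicalClosure = ⊤ := by
  refine topologicalClosure_eq_top_of_forall_dual fun φ hφ ↦ ?_
  obtain ⟨w, rfl⟩ := hW φ
  have flip_eq_zero : A.flip w = 0 := ContinuousLinearMap.ext fun v ↦ hφ (A v) ⟨v, rfl⟩
  rw [(map_eq_zero_iff A.flip hA).1 flip_eq_zero, map_zero]

end Seminormed

theorem bijective_iff_exists_mul_norm_le_norm_and_flip {V W : Type*} [NormedAddCommGroup V]
    [NormedSpace 𝕜 V] [CompleteSpace V] [NormedAddCommGroup W] [NormedSpace 𝕜 W]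
    (hW : IsReflexiveSpace 𝕜 W) (A : V →L[𝕜] StrongDual 𝕜 W) :
    Bijective A ↔
      ∃ β > (0 : ℝ), (∀ v, β * ‖v‖ ≤ ‖A v‖) ∧ (∀ w, β * ‖w‖ ≤ ‖A.flip w‖) := by
  constructor
  · intro hA
    obtain ⟨β, hβ, hbelow⟩ := antilipschitzWith_iff_exists_mul_le_norm.1
      (A.bijective_iff_dense_range_and_antilipschitz.1 hA).2
    exact ⟨β, hβ, hbelow, mul_norm_le_norm_flip_of_surjective hβ hA.surjective hbelow⟩
  · rintro ⟨β, hβ, hbelow, hbelow_flip⟩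
    obtain ⟨c, hflip⟩ := antilipschitzWith_iff_exists_mul_le_norm.2 ⟨β, hβ, hbelow_flip⟩
    exact A.bijective_iff_dense_range_and_antilipschitz.2
      ⟨topologicalClosure_range_eq_top_of_injective_flip hW hflip.injective,
        antilipschitzWith_iff_exists_mul_le_norm.2 ⟨β, hβ, hbelow⟩⟩

end RCLike

theorem banach_necas_babuska_general
    {V W : Type*} [NormedAddCommGroup V] [NormedSpace ℝ V] [CompleteSpace V]
    [NormedAddCommGroup W] [NormedSpace ℝ W] (hW : IsReflexiveSpace ℝ W)
    (a : V →ₗ[ℝ] W →ₗ[ℝ] ℝ) (A : V →L[ℝ] (W →L[ℝ] ℝ)) (hA : ∀ v w, A v w = a v w) :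
    Bijective A ↔
      ∃ β > (0 : ℝ),
        (∀ v : V, β * ‖v‖ ≤ sSup {x : ℝ | ∃ w : W, w ≠ 0 ∧ x = a v w / ‖w‖}) ∧
        (∀ w : W, β * ‖w‖ ≤ sSup {x : ℝ | ∃ v : V, v ≠ 0 ∧ x = a v w / ‖v‖}) := by
  have sSup_right (v : V) : sSup {x : ℝ | ∃ w : W, w ≠ 0 ∧ x = a v w / ‖w‖} = ‖A v‖ := by
    simpa only [hA] using sSup_apply_div_norm_eq_opNorm (A v)
  have sSup_left (w : W) : sSup {x : ℝ | ∃ v : V, v ≠ 0 ∧ x = a v w / ‖v‖} = ‖A.flip w‖ := by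
    simpa only [flip_apply, hA] using sSup_apply_div_norm_eq_opNorm (A.flip w)
  simpa only [sSup_right, sSup_left] using bijective_iff_exists_mul_norm_le_norm_and_flip hW A

/-- **Banach–Nečas–Babuška theorem** (Hilbert space version).
Let `a` be a bounded bilinear form on `V × W` and `A : V → W'` the induced bounded
linear operator into the dual, `(A v) w = a v w`.  Then `A` is bijective if and only if
there is `β > 0` such that both inf-sup conditions hold. -/
theorem banach_necas_babuska
    {V W : Type*} [NormedAddCommGroup V] [InnerProductSpace ℝ V] [CompleteSpace V]
    [NormedAddCommGroup W] [InnerProductSpace ℝ W] [CompleteSpace W]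
    (a : V →ₗ[ℝ] W →ₗ[ℝ] ℝ) (M : ℝ) (hM : 0 ≤ M)
    (hbound : ∀ v w, |a v w| ≤ M * ‖v‖ * ‖w‖)
    (A : V →L[ℝ] (W →L[ℝ] ℝ)) (hA : ∀ v w, A v w = a v w) :
    Function.Bijective A ↔
      ∃ β > (0 : ℝ),
        (∀ v : V, β * ‖v‖ ≤ sSup {x : ℝ | ∃ w : W, w ≠ 0 ∧ x = a v w / ‖w‖}) ∧
        (∀ w : W, β * ‖w‖ ≤ sSup {x : ℝ | ∃ v : V, v ≠ 0 ∧ x = a v w / ‖v‖}) :=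
  banach_necas_babuska_general isReflexiveSpace_of_innerProductSpace a A hA
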